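/- The map ψ(z',z_n) := (2^{1/2m₁}(1+z_n)^{−1/m₁} z₁, …, 2^{1/2m_{n−1}}(1+z_n)^{−1/m_{n−1}} z_{n−1}, (1−z_n)/(1+z_n)), with principal-branch complex powers, is an involution: ψ(ψ(z)) = z for every z = (z',z_n) ∈ ℂⁿ with Re(z_n) > −1. Moreover ψ(0',0) = (0',1) and ψ(0',1) = (0',0). -/

import Mathlib

open Complex Metric Set

noncomputable section

/-- `ℂⁿ` with `n = N + 1`, carrying the Euclidean norm; points are written `z = (z', z_n)`
with `z' ∈ ℂᴺ` the first `N` coordinates and `z_n` the last coordinate. -/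
abbrev CSp (N : ℕ) : Type := EuclideanSpace ℂ (Fin (N + 1))

variable {N : ℕ}

/-- The last coordinate `z_n` of `z = (z', z_n)`. -/
def lastC (z : CSp N) : ℂ := z (Fin.last N)

/-- The first `N` coordinates `z'` of `z = (z', z_n)`. -/
def initC (z : CSp N) : Fin N → ℂ := fun j => z j.castSucc

/-- The point `(z', z_n) ∈ ℂⁿ`. -/
def mkPt (z' : Fin N → ℂ) (zn : ℂ) : CSp N := WithLp.toLp 2 (Fin.snoc z' zn)

/-- The weight `wt(K) = Σ_j k_j / (2 m_j)` of a multi-index `K` with respect to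
`Λ = (1/m₁, …, 1/m_N)`. -/
def wt (m : Fin N → ℕ) (K : Fin N → ℕ) : ℝ := ∑ j, (K j : ℝ) / (2 * m j)

/-- `P` is a real-valued weighted homogeneous polynomial of the form
`P(z') = Σ_{wt(K)=wt(L)=1/2} a_{KL} z'^K conj(z')^L` with `a_{KL} = conj (a_{LK})`. -/
def IsWHP (m : Fin N → ℕ) (P : (Fin N → ℂ) → ℝ) : Prop :=
  ∃ a : (Fin N → ℕ) → (Fin N → ℕ) → ℂ,
    {q : (Fin N → ℕ) × (Fin N → ℕ) | a q.1 q.2 ≠ 0}.Finite ∧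
    (∀ K L, a K L = starRingEnd ℂ (a L K)) ∧
    (∀ K L, a K L ≠ 0 → wt m K = 1 / 2 ∧ wt m L = 1 / 2) ∧
    (∀ z' : Fin N → ℂ, (P z' : ℂ) =
      ∑ᶠ K, ∑ᶠ L, a K L * (∏ j, z' j ^ K j) * ∏ j, starRingEnd ℂ (z' j) ^ L j)

/-- The map `ψ(z', z_n) = (2^{1/2m₁}(1+z_n)^{-1/m₁} z₁, …, (1-z_n)/(1+z_n))`,
with principal-branch complex powers. -/
def psiMap (m : Fin N → ℕ) (z : CSp N) : CSp N :=
  mkPt (fun j => (2 : ℂ) ^ (1 / (2 * (m j : ℂ))) * (1 + lastC z) ^ (-(1 / (m j : ℂ))) * initC z j)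
       ((1 - lastC z) / (1 + lastC z))

/-!
The Cayley transform `c(w) = (1 - w) / (1 + w)` is an involution because `1 + c(w) = 2 / (1 + w)`.
The same identity governs the multipliers `2 ^ (s / 2) * (1 + w) ^ (-s)`: on the slit plane,
principal powers commute with inversion and with positive real scalars, so the multipliers at `w`
and `c(w)` combine to `2 ^ (s / 2) * 2 ^ (-s) * 2 ^ (s / 2) = 1`.
-/

theorem ofReal_mul_cpow {r : ℝ} (hr : 0 ≤ r) (x s : ℂ) :
    ((r : ℂ) * x) ^ s = (r : ℂ) ^ s * x ^ s := by
  rcases eq_or_ne s 0 with rfl | hs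
  · simp
  rcases hr.eq_or_lt with rfl | hr
  · simp [hs]
  rcases eq_or_ne x 0 with rfl | hx
  · simp [hs]
  have hr₀ : (r : ℂ) ≠ 0 := ofReal_ne_zero.2 hr.ne'
  rw [cpow_def_of_ne_zero (mul_ne_zero hr₀ hx), cpow_def_of_ne_zero hr₀, cpow_def_of_ne_zero hx,
    log_ofReal_mul hr hx, ofReal_log hr.le, add_mul, exp_add]

theorem ofReal_div_cpow {r : ℝ} (hr : 0 ≤ r) {x : ℂ} (hx : x.arg ≠ Real.pi) (s : ℂ) :
    ((r : ℂ) / x) ^ s = (r : ℂ) ^ s / x ^ s := by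
  rw [div_eq_mul_inv, ofReal_mul_cpow hr, inv_cpow _ _ hx, div_eq_mul_inv]

/-- The Cayley transform `w ↦ (1 - w) / (1 + w)`, the action of `ψ` on the last coordinate. -/
def cayley (w : ℂ) : ℂ := (1 - w) / (1 + w)

theorem one_add_cayley {w : ℂ} (hw : 1 + w ≠ 0) : 1 + cayley w = 2 / (1 + w) := by
  rw [cayley]
  field_simp
  ring

theorem cayley_cayley {w : ℂ} (hw : 1 + w ≠ 0) : cayley (cayley w) = w := by
  rw [cayley, one_add_cayley hw, cayley]
  field_simp
  ring

/-- The multiplier `2 ^ (s / 2) * (1 + w) ^ (-s)` by which `ψ` scales a coordinate of exponent `s`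
(`s = 1 / m_j` in the `j`-th coordinate) over the last coordinate `w`. -/
def cayleyFactor (s w : ℂ) : ℂ := 2 ^ (s / 2) * (1 + w) ^ (-s)

theorem cayleyFactor_cayley_mul_cayleyFactor (s : ℂ) {w : ℂ} (hw : 1 + w ∈ slitPlane) :
    cayleyFactor s (cayley w) * cayleyFactor s w = 1 := by
  have hw₀ : 1 + w ≠ 0 := slitPlane_ne_zero hw
  have hpow : (1 + w) ^ (-s) ≠ 0 := by simp [cpow_eq_zero_iff, hw₀]
  have hdiv : (2 / (1 + w)) ^ (-s) = 2 ^ (-s) / (1 + w) ^ (-s) :=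
    mod_cast ofReal_div_cpow zero_le_two (slitPlane_arg_ne_pi hw) (-s)
  calc cayleyFactor s (cayley w) * cayleyFactor s w
      = 2 ^ (s / 2) * (2 ^ (-s) / (1 + w) ^ (-s)) * (2 ^ (s / 2) * (1 + w) ^ (-s)) := by
        rw [cayleyFactor, cayleyFactor, one_add_cayley hw₀, hdiv]
    _ = 2 ^ (s / 2) * 2 ^ (-s) * 2 ^ (s / 2) := by field_simp
    _ = 2 ^ (s / 2 + -s + s / 2) := by
        rw [cpow_add _ _ two_ne_zero, cpow_add _ _ two_ne_zero]
    _ = 1 := by rw [add_right_comm, add_halves, add_neg_cancel, cpow_zero]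

theorem CSp.ext_initC_lastC {z w : CSp N} (hinit : initC z = initC w) (hlast : lastC z = lastC w) :
    z = w := by
  ext j
  induction j using Fin.lastCases with
  | last => exact hlast
  | cast i => exact congrFun hinit i

theorem lastC_mkPt (z' : Fin N → ℂ) (w : ℂ) : lastC (mkPt z' w) = w := by
  simp [lastC, mkPt]

theorem initC_mkPt (z' : Fin N → ℂ) (w : ℂ) : initC (mkPt z' w) = z' := by
  funext j
  simp [initC, mkPt]

theorem mkPt_initC_lastC (z : CSp N) : mkPt (initC z) (lastC z) = z :=
  CSp.ext_initC_lastC (initC_mkPt _ _) (lastC_mkPt _ _)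

theorem mkPt_zero_left (w : ℂ) :
    mkPt (0 : Fin N → ℂ) w = EuclideanSpace.single (Fin.last N) w := by
  refine CSp.ext_initC_lastC ?_ ?_
  · funext j
    simp [initC, mkPt]
  · simp [lastC, mkPt]

/-- The map `ψ` with the exponents `1 / m_j` replaced by arbitrary complex exponents `s j`. -/
def weightedCayley (s : Fin N → ℂ) (z : CSp N) : CSp N :=
  mkPt (fun j => cayleyFactor (s j) (lastC z) * initC z j) (cayley (lastC z))

theorem psiMap_eq_weightedCayley (m : Fin N → ℕ) :
    psiMap m = weightedCayley fun j => 1 / (m j : ℂ) := by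
  funext z
  simp only [psiMap, weightedCayley, cayleyFactor, cayley, div_div, mul_comm (2 : ℂ)]

theorem weightedCayley_weightedCayley (s : Fin N → ℂ) {z : CSp N}
    (hz : 1 + lastC z ∈ slitPlane) : weightedCayley s (weightedCayley s z) = z := by
  rw [weightedCayley, weightedCayley, lastC_mkPt, initC_mkPt, cayley_cayley (slitPlane_ne_zero hz)]
  simp only [← mul_assoc, cayleyFactor_cayley_mul_cayleyFactor _ hz, one_mul]
  exact mkPt_initC_lastC z

theorem weightedCayley_single_last (s : Fin N → ℂ) (w : ℂ) :
    weightedCayley s (EuclideanSpace.single (Fin.last N) w) =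
      EuclideanSpace.single (Fin.last N) (cayley w) := by
  rw [← mkPt_zero_left, weightedCayley, lastC_mkPt, initC_mkPt, ← mkPt_zero_left]
  congr 1
  funext j
  exact mul_zero _

theorem stmt8_general (s : Fin N → ℂ) :
    (∀ z : CSp N, 1 + lastC z ∈ slitPlane → weightedCayley s (weightedCayley s z) = z) ∧
    weightedCayley s 0 = EuclideanSpace.single (Fin.last N) 1 ∧
    weightedCayley s (EuclideanSpace.single (Fin.last N) 1) = 0 := by
  have hzero : EuclideanSpace.single (Fin.last N) (0 : ℂ) = 0 :=
    (PiLp.single_eq_zero_iff 2 _).2 rfl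
  refine ⟨fun z hz => weightedCayley_weightedCayley s hz, ?_, ?_⟩
  · simpa [cayley, hzero] using weightedCayley_single_last s 0
  · simpa [cayley, hzero] using weightedCayley_single_last s 1

/-- The map `ψ` is an involution: `ψ(ψ(z)) = z` for every `z = (z', z_n)` with
`Re z_n > -1`.  Moreover `ψ(0',0) = (0',1)` and `ψ(0',1) = (0',0)`. -/
theorem stmt8 {N : ℕ} (hN : 1 ≤ N) (m : Fin N → ℕ) (hm : ∀ j, 0 < m j) :
    (∀ z : CSp N, -1 < (lastC z).re → psiMap m (psiMap m z) = z) ∧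
    psiMap m (0 : CSp N) = EuclideanSpace.single (Fin.last N) (1 : ℂ) ∧
    psiMap m (EuclideanSpace.single (Fin.last N) (1 : ℂ)) = 0 := by
  obtain ⟨hinv, h₀, h₁⟩ := psiMap_eq_weightedCayley m ▸ stmt8_general fun j => 1 / (m j : ℂ)
  exact ⟨fun z hz => hinv z (.inl (by simpa [neg_lt_iff_pos_add'] using hz)), h₀, h₁⟩
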